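/- arXiv:1810.08932 — 3 statements merged into one kernel-verified Lean document; each statement's English description precedes it below -/
import Mathlib

section
/- For all α, β, γ, δ ∈ (0, π/2) and every subset S of the four qubit positions {A,B,C,D}, the partial transpose ρ^{T_S} of ρ on the positions in S — the matrix obtained from ρ by interchanging the row coordinate and the column coordinate at every position in S, e.g. for S = {C,D}: ρ^{T_{CD}}[(i,j,k,l),(i',j',k',l')] := ρ[(i,j,k',l'),(i',j',k,l)] — is positive semidefinite. In particular ρ is a PPT state for the AB:CD bipartition and for every bipartition of the four qubits. -/
open scoped ComplexOrder

/-- The 4-qubit index type. -/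
abbrev Q4 : Type := Fin 2 × Fin 2 × Fin 2 × Fin 2

/-- The standard inner product on the 4-qubit space `Q4 → ℂ`. -/
noncomputable def ip (v w : Q4 → ℂ) : ℂ := ∑ x, (starRingEnd ℂ) (v x) * w x

/-- The 4-qubit product vector `|x,y,z,w⟩`. -/
def pv (x y z w : Fin 2 → ℂ) : Q4 → ℂ := fun p => x p.1 * y p.2.1 * z p.2.2.1 * w p.2.2.2

/-- `|0⟩`. -/
def ket0 : Fin 2 → ℂ := ![1, 0]

/-- `|1⟩`. -/
def ket1 : Fin 2 → ℂ := ![0, 1]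

/-- `(cos t, sin t)` as a qubit state. -/
noncomputable def vk (t : ℝ) : Fin 2 → ℂ := ![(Real.cos t : ℂ), (Real.sin t : ℂ)]

/-- `(sin t, −cos t)` as a qubit state, orthogonal to `vk t`. -/
noncomputable def vk' (t : ℝ) : Fin 2 → ℂ := ![(Real.sin t : ℂ), -(Real.cos t : ℂ)]

/-- The 4-qubit UPB of size 9:
`{|0,0,1,d⟩, |0,1,c,0⟩, |0,b,0,1⟩, |1,1,0,d⟩, |1,b,1,0⟩, |1,0,c,1⟩, |a,0,0,0⟩,
 |a,1,1,1⟩, |a',b',c',d'⟩}`. -/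
noncomputable def S9 (α β γ δ : ℝ) : Fin 9 → Q4 → ℂ :=
  ![pv ket0 ket0 ket1 (vk δ),
    pv ket0 ket1 (vk γ) ket0,
    pv ket0 (vk β) ket0 ket1,
    pv ket1 ket1 ket0 (vk δ),
    pv ket1 (vk β) ket1 ket0,
    pv ket1 ket0 (vk γ) ket1,
    pv (vk α) ket0 ket0 ket0,
    pv (vk α) ket1 ket1 ket1,
    pv (vk' α) (vk' β) (vk' γ) (vk' δ)]

/-- The 4-qubit state `ρ := (1/7)(1 − Σ_{v ∈ S₉} vv*)`, a `16 × 16` complex matrix. -/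
noncomputable def rho (α β γ δ : ℝ) : Matrix Q4 Q4 ℂ :=
  (1 / 7 : ℂ) •
    ((1 : Matrix Q4 Q4 ℂ) -
      ∑ t : Fin 9, Matrix.of fun x y : Q4 => S9 α β γ δ t x * (starRingEnd ℂ) (S9 α β γ δ t y))

/-- The index swap defining the partial transpose on the set `s` of qubit positions:
position `i` of the pair `(x, y)` is swapped whenever `s i = true`. -/
def ptIdx (s : Fin 4 → Bool) (x y : Q4) : Q4 :=
  (if s 0 then y.1 else x.1, if s 1 then y.2.1 else x.2.1,
   if s 2 then y.2.2.1 else x.2.2.1, if s 3 then y.2.2.2 else x.2.2.2)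

/-- The partial transpose of a 4-qubit matrix on the set `s` of qubit positions. -/
noncomputable def pt (s : Fin 4 → Bool) (M : Matrix Q4 Q4 ℂ) : Matrix Q4 Q4 ℂ :=
  Matrix.of fun x y : Q4 => M (ptIdx s x y) (ptIdx s y x)

/-!
Partial transposition on a set `s` of sites turns the projection onto a product vector into the
projection onto the product vector whose factors at the sites in `s` are conjugated, and it fixes
the identity. Inner products of product vectors factor over the sites, so conjugating some of the
factors keeps norms and orthogonality. Hence the partial transpose of `1 - ∑ v v*`, for an
orthonormal family of product vectors, is again the orthogonal projection onto the complement of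
such a family.
-/

open scoped InnerProductSpace MatrixOrder
open Matrix

section OrthComplProj

variable {𝕜 n τ : Type*} [RCLike 𝕜] [Fintype τ]

/-- The matrix `1 - ∑ₜ vₜ vₜ*`, which for an orthonormal family `v` is the orthogonal projection
onto the complement of its span. -/
noncomputable def orthComplProj [DecidableEq n] (v : τ → EuclideanSpace 𝕜 n) : Matrix n n 𝕜 :=
  1 - ∑ t, vecMulVec (v t) (star ⇑(v t))

variable [Fintype n]

theorem isStarProjection_sum_vecMulVec {v : τ → EuclideanSpace 𝕜 n} (hv : Orthonormal 𝕜 v) :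
    IsStarProjection (∑ t, vecMulVec (v t) (star ⇑(v t))) where
  isIdempotentElem := by
    classical
    have hmul (t u : τ) : vecMulVec (v t) (star ⇑(v t)) * vecMulVec (v u) (star ⇑(v u)) =
        if t = u then vecMulVec (v t) (star ⇑(v t)) else 0 := by
      rw [vecMulVec_mul_vecMulVec, dotProduct_comm, ← EuclideanSpace.inner_eq_star_dotProduct,
        orthonormal_iff_ite.mp hv]
      split_ifs with h <;> simp [h]
    simp [IsIdempotentElem, Finset.sum_mul_sum, hmul]
  isSelfAdjoint := by
    simp [IsSelfAdjoint, star_eq_conjTranspose, conjTranspose_vecMulVec]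

theorem posSemidef_orthComplProj [DecidableEq n] {v : τ → EuclideanSpace 𝕜 n}
    (hv : Orthonormal 𝕜 v) :
    (orthComplProj v).PosSemidef :=
  nonneg_iff_posSemidef.mp (isStarProjection_sum_vecMulVec hv).one_sub_nonneg

end OrthComplProj

section ConjVec

variable {𝕜 n : Type*} [RCLike 𝕜]

/-- The entrywise complex conjugate of a vector. -/
def conjVec (x : EuclideanSpace 𝕜 n) : EuclideanSpace 𝕜 n :=
  WithLp.toLp 2 (star ⇑x)

variable [Fintype n]

theorem inner_conjVec_conjVec (x y : EuclideanSpace 𝕜 n) :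
    ⟪conjVec x, conjVec y⟫_𝕜 = ⟪y, x⟫_𝕜 := by
  simp [conjVec, EuclideanSpace.inner_eq_star_dotProduct, dotProduct_comm]

theorem norm_conjVec (x : EuclideanSpace 𝕜 n) : ‖conjVec x‖ = ‖x‖ := by
  simp [conjVec, EuclideanSpace.norm_eq]

end ConjVec

section PartialTranspose

variable {R ι : Type*} {κ : ι → Type*} [DecidableEq ι]

/-- The partial transpose of a matrix on the tensor factors in `s`: the row and column coordinates
at the positions in `s` are interchanged. -/
def partialTranspose (s : Finset ι) (M : Matrix (∀ i, κ i) (∀ i, κ i) R) :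
    Matrix (∀ i, κ i) (∀ i, κ i) R :=
  Matrix.of fun p q => M (s.piecewise q p) (s.piecewise p q)

theorem piecewise_swap_eq_iff (s : Finset ι) (p q : ∀ i, κ i) :
    s.piecewise q p = s.piecewise p q ↔ p = q := by
  refine ⟨fun h => funext fun i => ?_, fun h => by rw [h]⟩
  have hi := congrFun h i
  by_cases his : i ∈ s <;> simp_all

theorem partialTranspose_one [Fintype ι] [∀ i, DecidableEq (κ i)] [Zero R] [One R]
    (s : Finset ι) : partialTranspose s (1 : Matrix (∀ i, κ i) (∀ i, κ i) R) = 1 := by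
  ext p q
  simp [partialTranspose, one_apply, piecewise_swap_eq_iff]

end PartialTranspose

section ConjOn

variable {𝕜 ι : Type*} {κ : ι → Type*} [RCLike 𝕜] [DecidableEq ι]

/-- The family of vectors `x` with the members at the positions in `s` conjugated: partial
transposition on `s` acts in this way on projections onto product vectors. -/
def conjOn (s : Finset ι) (x : ∀ i, EuclideanSpace 𝕜 (κ i)) : ∀ i, EuclideanSpace 𝕜 (κ i) :=
  s.piecewise (fun i => conjVec (x i)) x

variable [∀ i, Fintype (κ i)]

theorem norm_conjOn_apply (s : Finset ι) (x : ∀ i, EuclideanSpace 𝕜 (κ i)) (i : ι) :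
    ‖conjOn s x i‖ = ‖x i‖ := by
  by_cases hi : i ∈ s <;> simp [conjOn, hi, norm_conjVec]

theorem inner_conjOn_apply_eq_zero_iff (s : Finset ι) (x y : ∀ i, EuclideanSpace 𝕜 (κ i)) (i : ι) :
    ⟪conjOn s x i, conjOn s y i⟫_𝕜 = 0 ↔ ⟪x i, y i⟫_𝕜 = 0 := by
  by_cases hi : i ∈ s <;> simp [conjOn, hi, inner_conjVec_conjVec, inner_eq_zero_symm]

end ConjOn

section ProductVectors

variable {𝕜 ι τ : Type*} {κ : ι → Type*} [RCLike 𝕜] [Fintype ι]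

/-- The product vector `⨂ᵢ xᵢ`, in coordinates: the tensor product of the spaces `𝕜^κᵢ` is
`𝕜^(∏ᵢ κᵢ)`. -/
noncomputable def prodVec (x : ∀ i, EuclideanSpace 𝕜 (κ i)) : EuclideanSpace 𝕜 (∀ i, κ i) :=
  WithLp.toLp 2 fun p => ∏ i, x i (p i)

section Norm

variable [DecidableEq ι] [∀ i, Fintype (κ i)]

theorem inner_prodVec (x y : ∀ i, EuclideanSpace 𝕜 (κ i)) :
    ⟪prodVec x, prodVec y⟫_𝕜 = ∏ i, ⟪x i, y i⟫_𝕜 := by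
  simp [prodVec, PiLp.inner_apply, Finset.prod_univ_sum, Finset.prod_mul_distrib]

theorem norm_prodVec (x : ∀ i, EuclideanSpace 𝕜 (κ i)) : ‖prodVec x‖ = ∏ i, ‖x i‖ := by
  have h : ((‖prodVec x‖ ^ 2 : ℝ) : 𝕜) = ((∏ i, ‖x i‖) ^ 2 : ℝ) := by
    simp only [← Finset.prod_pow, RCLike.ofReal_pow, RCLike.ofReal_prod,
      ← inner_self_eq_norm_sq_to_K, inner_prodVec]
  exact (sq_eq_sq₀ (norm_nonneg _) (Finset.prod_nonneg fun _ _ => norm_nonneg _)).mp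
    (RCLike.ofReal_injective h)

theorem orthonormal_prodVec {f : τ → ∀ i, EuclideanSpace 𝕜 (κ i)} (hunit : ∀ t i, ‖f t i‖ = 1)
    (horth : Pairwise fun t u => ∃ i, ⟪f t i, f u i⟫_𝕜 = 0) :
    Orthonormal 𝕜 fun t => prodVec (f t) := by
  refine ⟨fun t => by simp [norm_prodVec, hunit], fun t u htu => ?_⟩
  obtain ⟨i, hi⟩ := horth htu
  rw [inner_prodVec, Finset.prod_eq_zero (Finset.mem_univ i) hi]

end Norm

section PartialTransposeProdVec

variable [DecidableEq ι]

theorem partialTranspose_vecMulVec_prodVec (s : Finset ι) (x : ∀ i, EuclideanSpace 𝕜 (κ i)) :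
    partialTranspose s (vecMulVec (prodVec x) (star ⇑(prodVec x))) =
      vecMulVec (prodVec (conjOn s x)) (star ⇑(prodVec (conjOn s x))) := by
  ext p q
  simp only [partialTranspose, prodVec, of_apply, vecMulVec_apply, Pi.star_apply, star_prod,
    ← Finset.prod_mul_distrib]
  refine Finset.prod_congr rfl fun i _ => ?_
  by_cases hi : i ∈ s <;> simp [conjOn, conjVec, hi, mul_comm]

theorem partialTranspose_orthComplProj_prodVec [Fintype τ] [∀ i, DecidableEq (κ i)] (s : Finset ι)
    (f : τ → ∀ i, EuclideanSpace 𝕜 (κ i)) :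
    partialTranspose s (orthComplProj fun t => prodVec (f t)) =
      orthComplProj fun t => prodVec (conjOn s (f t)) := by
  calc
    _ = partialTranspose s 1 -
        ∑ t, partialTranspose s (vecMulVec (prodVec (f t)) (star ⇑(prodVec (f t)))) := by
      ext p q
      simp [partialTranspose, orthComplProj, Matrix.sum_apply]
    _ = orthComplProj fun t => prodVec (conjOn s (f t)) := by
      simp only [partialTranspose_one, partialTranspose_vecMulVec_prodVec, orthComplProj]

variable [∀ i, Fintype (κ i)]

theorem orthonormal_prodVec_conjOn (s : Finset ι) {f : τ → ∀ i, EuclideanSpace 𝕜 (κ i)}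
    (hf : Orthonormal 𝕜 fun t => prodVec (f t)) :
    Orthonormal 𝕜 fun t => prodVec (conjOn s (f t)) := by
  refine ⟨fun t => ?_, fun t u htu => ?_⟩
  · simpa only [norm_prodVec, norm_conjOn_apply] using hf.1 t
  · simpa only [inner_prodVec, Finset.prod_eq_zero_iff, inner_conjOn_apply_eq_zero_iff]
      using hf.2 htu

theorem posSemidef_partialTranspose_orthComplProj [Fintype τ] [∀ i, DecidableEq (κ i)]
    (s : Finset ι) {f : τ → ∀ i, EuclideanSpace 𝕜 (κ i)}
    (hf : Orthonormal 𝕜 fun t => prodVec (f t)) :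
    (partialTranspose s (orthComplProj fun t => prodVec (f t))).PosSemidef := by
  rw [partialTranspose_orthComplProj_prodVec]
  exact posSemidef_orthComplProj (orthonormal_prodVec_conjOn s hf)

end PartialTransposeProdVec

end ProductVectors

section S9

/-- The symbols occurring in the description of `S9`: `|0⟩`, `|1⟩` and, at the site with angle `θ`,
the vectors `vk θ` and `vk' θ`. They make the orthogonality of `S9` decidable. -/
inductive LocalKet
  | zero | one | rot | rotPerp
  deriving DecidableEq

namespace LocalKet

/-- The unit vector denoted by a symbol at a site with angle `θ`. -/
noncomputable def toVec (θ : ℝ) : LocalKet → EuclideanSpace ℂ (Fin 2)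
  | zero => WithLp.toLp 2 ket0
  | one => WithLp.toLp 2 ket1
  | rot => WithLp.toLp 2 (vk θ)
  | rotPerp => WithLp.toLp 2 (vk' θ)

/-- The symbol completing a given one to an orthonormal basis of the qubit, whatever the angle. -/
def perp : LocalKet → LocalKet
  | zero => one
  | one => zero
  | rot => rotPerp
  | rotPerp => rot

theorem norm_toVec (θ : ℝ) (k : LocalKet) : ‖k.toVec θ‖ = 1 := by
  cases k <;> simp [toVec, ket0, ket1, vk, vk', EuclideanSpace.norm_eq, Complex.norm_real,
    -Complex.ofReal_cos, -Complex.ofReal_sin]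

theorem inner_toVec_toVec_perp (θ : ℝ) (k : LocalKet) : ⟪k.toVec θ, k.perp.toVec θ⟫_ℂ = 0 := by
  cases k <;> simp [toVec, perp, ket0, ket1, vk, vk', PiLp.inner_apply, Complex.conj_ofReal,
    -Complex.ofReal_cos, -Complex.ofReal_sin, mul_comm]

end LocalKet

open LocalKet in
/-- The local symbols of the nine vectors of `S9`. -/
def S9Ket : Fin 9 → Fin 4 → LocalKet :=
  ![![zero, zero, one, rot],
    ![zero, one, rot, zero],
    ![zero, rot, zero, one],
    ![one, one, zero, rot],
    ![one, rot, one, zero],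
    ![one, zero, rot, one],
    ![rot, zero, zero, zero],
    ![rot, one, one, one],
    ![rotPerp, rotPerp, rotPerp, rotPerp]]

/-- The local factors of the nine product vectors of `S9`, the angles being listed in `θ`. -/
noncomputable def S9Factor (θ : Fin 4 → ℝ) (t : Fin 9) (i : Fin 4) : EuclideanSpace ℂ (Fin 2) :=
  (S9Ket t i).toVec (θ i)

theorem exists_S9Ket_eq_perp : ∀ t u : Fin 9, t ≠ u → ∃ i, S9Ket u i = (S9Ket t i).perp := by
  decide

theorem orthonormal_S9Factor (θ : Fin 4 → ℝ) :
    Orthonormal ℂ fun t => prodVec (S9Factor θ t) := by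
  refine orthonormal_prodVec (fun t i => LocalKet.norm_toVec _ _) fun t u htu => ?_
  obtain ⟨i, hi⟩ := exists_S9Ket_eq_perp t u htu
  exact ⟨i, by rw [S9Factor, S9Factor, hi, LocalKet.inner_toVec_toVec_perp]⟩

/-- A four-qubit index as a function of the qubit position. -/
def Q4.toPi (p : Q4) : Fin 4 → Fin 2 :=
  ![p.1, p.2.1, p.2.2.1, p.2.2.2]

theorem Q4.toPi_injective : Function.Injective Q4.toPi := by
  decide

theorem S9_eq_prodVec (α β γ δ : ℝ) (t : Fin 9) (p : Q4) :
    S9 α β γ δ t p = prodVec (S9Factor ![α, β, γ, δ] t) p.toPi := by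
  simp only [prodVec, Fin.prod_univ_four]
  fin_cases t <;> rfl

theorem rho_eq_smul_submatrix (α β γ δ : ℝ) :
    rho α β γ δ = (1 / 7 : ℂ) •
      (orthComplProj fun t => prodVec (S9Factor ![α, β, γ, δ] t)).submatrix Q4.toPi Q4.toPi := by
  ext p q
  simp [rho, orthComplProj, S9_eq_prodVec, Matrix.sum_apply, vecMulVec_apply, one_apply,
    Q4.toPi_injective.eq_iff]

theorem Q4.toPi_ptIdx (s : Fin 4 → Bool) (p q : Q4) :
    (ptIdx s p q).toPi = ({i | s i} : Finset (Fin 4)).piecewise q.toPi p.toPi := by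
  ext i
  fin_cases i <;> simp [ptIdx, Q4.toPi, Finset.piecewise]

theorem pt_smul_submatrix_toPi (s : Fin 4 → Bool) (c : ℂ)
    (M : Matrix (Fin 4 → Fin 2) (Fin 4 → Fin 2) ℂ) :
    pt s (c • M.submatrix Q4.toPi Q4.toPi) =
      c • (partialTranspose {i | s i} M).submatrix Q4.toPi Q4.toPi := by
  ext p q
  simp [pt, partialTranspose, Q4.toPi_ptIdx]

end S9

theorem stmt15_general (α β γ δ : ℝ) (s : Fin 4 → Bool) : (pt s (rho α β γ δ)).PosSemidef := by
  rw [rho_eq_smul_submatrix, pt_smul_submatrix_toPi]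
  have hpos := posSemidef_partialTranspose_orthComplProj {i | s i}
    (orthonormal_S9Factor ![α, β, γ, δ])
  exact (hpos.submatrix Q4.toPi).smul (by positivity)

/-- For every subset `s` of the four qubit positions the partial transpose of `ρ`
on `s` is positive semidefinite; in particular `ρ` is PPT for every bipartition
of the four qubits. -/
theorem stmt15 (α β γ δ : ℝ) (hα : α ∈ Set.Ioo 0 (Real.pi / 2))
    (hβ : β ∈ Set.Ioo 0 (Real.pi / 2)) (hγ : γ ∈ Set.Ioo 0 (Real.pi / 2))
    (hδ : δ ∈ Set.Ioo 0 (Real.pi / 2)) :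
    ∀ s : Fin 4 → Bool, (pt s (rho α β γ δ)).PosSemidef :=
  stmt15_general α β γ δ
end

section
/- For all α, β, γ, δ ∈ (0, π/2), the range of ρ contains no nonzero AB:CD product vector: if v (i,j,k,l) = u (i,j) · w (k,l) for some u, w : Fin 2 × Fin 2 → ℂ and v = ρ · x for some x ∈ V (matrix–vector product), then v = 0. -/
/-
Write an `AB:CD` product vector as `U ⊗ W` with `2 × 2` matrices `U` and `W`. The range of `ρ` is
orthogonal to `S₉`, and orthogonality to each of the nine vectors says that one linear form
vanishes on `U` or another one vanishes on `W`. For eight of the nine vectors one form is an entry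
of one matrix and the other pairs a row or column of the other matrix with a vector without zero
entries, so it can vanish only if the two entries of that line are both zero or both nonzero.
Comparing the zero patterns of `U` and `W` shows that if both are nonzero, then `U` satisfies
`xᵀ U = 0 = U y` with `x ∈ {a, |0⟩, |1⟩}` and `y ∈ {b, |0⟩, |1⟩}`, and likewise for `W` with `c`
and `d`. As `a'` is independent of `x` and `b'` of `y`, the form `a'ᵀ U b'` cannot vanish, nor can
`c'ᵀ W d'`, which contradicts orthogonality to the ninth vector.
-/

open Matrix

section Matrices

variable {K m n ι : Type*}

theorem vecMul_one_sub_sum_vecMulVec [Ring K] [Fintype n] [DecidableEq n] [Fintype ι]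
    [DecidableEq ι] {e f : ι → n → K} (h : ∀ s t, f s ⬝ᵥ e t = if s = t then 1 else 0) (s : ι) :
    f s ᵥ* (1 - ∑ t, vecMulVec (e t) (f t)) = 0 := by
  simp [vecMul_sub, vecMul_sum, vecMul_vecMulVec, h]

theorem mulVec_apply_eq_zero [NonUnitalNonAssocSemiring K] [Fintype n]
    {M : Matrix m n K} {i : m} (x : n → K) (h : ∀ j, M i j = 0) : (M *ᵥ x) i = 0 := by
  simp only [mulVec, dotProduct, h, zero_mul, Finset.sum_const_zero]

theorem vecMul_apply_eq_zero [NonUnitalNonAssocSemiring K] [Fintype m]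
    {M : Matrix m n K} {j : n} (x : m → K) (h : ∀ i, M i j = 0) : (x ᵥ* M) j = 0 := by
  simp only [vecMul, dotProduct, h, mul_zero, Finset.sum_const_zero]

theorem exists_apply_ne_zero_of_ne_zero [Zero K] {M : Matrix m n K} (h : M ≠ 0) :
    ∃ i j, M i j ≠ 0 := by
  contrapose! h
  exact Matrix.ext h

theorem eq_zero_iff_of_dotProduct_eq_zero [NonUnitalNonAssocSemiring K] [NoZeroDivisors K]
    {x y : Fin 2 → K} (hx : ∀ i, x i ≠ 0) (h : x ⬝ᵥ y = 0) : y 0 = 0 ↔ y 1 = 0 := by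
  rw [vec2_dotProduct] at h
  constructor <;> intro hy <;> simpa [hy, hx] using h

theorem apply_eq_zero_iff_of_mulVec_apply_eq_zero [CommSemiring K] [NoZeroDivisors K]
    {M : Matrix m (Fin 2) K} {i : m} {x : Fin 2 → K} (hx : ∀ i, x i ≠ 0)
    (h : (M *ᵥ x) i = 0) : M i 0 = 0 ↔ M i 1 = 0 :=
  eq_zero_iff_of_dotProduct_eq_zero hx ((dotProduct_comm _ _).trans h)

theorem exists_linearIndependent_vecMul_eq_zero [Ring K] [NoZeroDivisors K]
    {M : Matrix (Fin 2) n K} {a a' : Fin 2 → K} (haa' : LinearIndependent K ![a, a'])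
    (ha' : ∀ i, a' i ≠ 0) (h : (∃ i, M.row i = 0) ∨ a ᵥ* M = 0) :
    ∃ x, LinearIndependent K ![x, a'] ∧ x ᵥ* M = 0 := by
  rcases h with ⟨i, hi⟩ | h
  · refine ⟨Pi.single i 1, LinearIndependent.pair_iff.2 fun s t hst => ?_, by simpa using hi⟩
    have ht : t = 0 := by simpa [ha'] using congrFun hst (i + 1)
    have hs : s = 0 := by simpa [ht] using congrFun hst i
    exact ⟨hs, ht⟩
  · exact ⟨a, haa', h⟩

variable [Field K]

theorem eq_zero_of_forall_dotProduct_mulVec_eq_zero [Fintype m] [Fintype n]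
    {M : Matrix m n K} {a : m → m → K} {b : n → n → K} (ha : LinearIndependent K a)
    (hb : LinearIndependent K b) (h : ∀ i j, a i ⬝ᵥ M *ᵥ b j = 0) : M = 0 := by
  classical
  have hA : IsUnit (of a).det :=
    (isUnit_iff_isUnit_det _).1 (linearIndependent_rows_iff_isUnit.1 ha)
  have hB : IsUnit (of b)ᵀ.det :=
    isUnit_det_transpose _ <| (isUnit_iff_isUnit_det _).1 (linearIndependent_rows_iff_isUnit.1 hb)
  have hAMB : of a * (M * (of b)ᵀ) = 0 := by
    ext i j
    exact h i j
  have hMB : M * (of b)ᵀ = 0 := by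
    rw [← nonsing_inv_mul_cancel_left _ (M * (of b)ᵀ) hA, hAMB, Matrix.mul_zero]
  rw [← mul_nonsing_inv_cancel_right _ M hB, hMB, Matrix.zero_mul]

theorem eq_zero_of_dotProduct_mulVec_eq_zero {M : Matrix (Fin 2) (Fin 2) K}
    {a a' b b' : Fin 2 → K} (haa' : LinearIndependent K ![a, a'])
    (hbb' : LinearIndependent K ![b, b']) (ha' : ∀ i, a' i ≠ 0) (hb' : ∀ i, b' i ≠ 0)
    (hrow : (∃ i, M.row i = 0) ∨ a ᵥ* M = 0) (hcol : (∃ j, M.col j = 0) ∨ M *ᵥ b = 0)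
    (h : a' ⬝ᵥ M *ᵥ b' = 0) : M = 0 := by
  obtain ⟨x, hx, hxM⟩ := exists_linearIndependent_vecMul_eq_zero haa' ha' hrow
  obtain ⟨y, hy, hMy⟩ := exists_linearIndependent_vecMul_eq_zero (M := Mᵀ) hbb' hb'
    (by simpa only [row_transpose, vecMul_transpose] using hcol)
  rw [vecMul_transpose] at hMy
  refine eq_zero_of_forall_dotProduct_mulVec_eq_zero hx hy ?_
  simp only [Fin.forall_fin_two, cons_val_zero, cons_val_one]
  simp only [dotProduct_mulVec x, hxM, hMy, h, dotProduct_zero, zero_dotProduct, and_self]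

end Matrices

section LinkedMatrices

/- A pattern is a function on the vertices of a 4-cycle whose edges are the rows and columns of a
`2 × 2` matrix, and the hypotheses match the vertices of each of the two cycles with the edges of
the other. A nonconstant pattern changes value along at least two edges, which forces the other
pattern to hold at the matching vertices. -/
theorem exists_line_or_forall_line_of_linked {P Q : Fin 2 → Fin 2 → Prop}
    (hQrow : ∀ i, P (i + 1) (i + 1) ∨ (Q i 0 ↔ Q i 1)) (hQcol : ∀ j, P j (j + 1) ∨ (Q 0 j ↔ Q 1 j))
    (hProw : ∀ i, Q i (i + 1) ∨ (P i 0 ↔ P i 1)) (hPcol : ∀ j, Q j j ∨ (P 0 j ↔ P 1 j))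
    (hP : ∃ i j, ¬P i j) (hQ : ∃ i j, ¬Q i j) :
    (((∃ i, ∀ j, P i j) ∨ ∀ j, Q j j → ∀ i, P i j) ∧
      ((∃ j, ∀ i, P i j) ∨ ∀ i, Q i (i + 1) → ∀ j, P i j)) ∧
    ((∃ i, ∀ j, Q i j) ∨ ∀ j, P j (j + 1) → ∀ i, Q i j) ∧
      ((∃ j, ∀ i, Q i j) ∨ ∀ i, P (i + 1) (i + 1) → ∀ j, Q i j) := by
  simp only [Fin.forall_fin_two, Fin.exists_fin_two, Fin.isValue, zero_add, Fin.reduceAdd] at *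
  grind

variable {K : Type*} [CommSemiring K]

/-- The eight conditions that orthogonality of `U ⊗ W` to the vectors of `S₉` other than
`|a',b',c',d'⟩` imposes: each entry of one matrix is matched with a row or column of the other one,
and either the entry is zero or the line is annihilated by the vector attached to its direction. -/
structure CyclicallyLinked (a b c d : Fin 2 → K) (U W : Matrix (Fin 2) (Fin 2) K) : Prop where
  mulVec_right : ∀ i, U (i + 1) (i + 1) = 0 ∨ (W *ᵥ d) i = 0
  vecMul_right : ∀ j, U j (j + 1) = 0 ∨ (c ᵥ* W) j = 0
  mulVec_left : ∀ i, W i (i + 1) = 0 ∨ (U *ᵥ b) i = 0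
  vecMul_left : ∀ j, W j j = 0 ∨ (a ᵥ* U) j = 0

namespace CyclicallyLinked

variable {a b c d : Fin 2 → K} {U W : Matrix (Fin 2) (Fin 2) K}

theorem exists_line_eq_zero_or_annihilated [NoZeroDivisors K]
    (h : CyclicallyLinked a b c d U W)
    (ha : ∀ i, a i ≠ 0) (hb : ∀ i, b i ≠ 0) (hc : ∀ i, c i ≠ 0) (hd : ∀ i, d i ≠ 0)
    (hU : U ≠ 0) (hW : W ≠ 0) :
    (((∃ i, U.row i = 0) ∨ a ᵥ* U = 0) ∧ ((∃ j, U.col j = 0) ∨ U *ᵥ b = 0)) ∧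
      ((∃ i, W.row i = 0) ∨ c ᵥ* W = 0) ∧ ((∃ j, W.col j = 0) ∨ W *ᵥ d = 0) := by
  obtain ⟨⟨hrowU, hcolU⟩, hrowW, hcolW⟩ := exists_line_or_forall_line_of_linked
    (P := fun i j => U i j = 0) (Q := fun i j => W i j = 0)
    (fun i => (h.mulVec_right i).imp_right (apply_eq_zero_iff_of_mulVec_apply_eq_zero hd))
    (fun j => (h.vecMul_right j).imp_right (eq_zero_iff_of_dotProduct_eq_zero hc))
    (fun i => (h.mulVec_left i).imp_right (apply_eq_zero_iff_of_mulVec_apply_eq_zero hb))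
    (fun j => (h.vecMul_left j).imp_right (eq_zero_iff_of_dotProduct_eq_zero ha))
    (exists_apply_ne_zero_of_ne_zero hU) (exists_apply_ne_zero_of_ne_zero hW)
  refine ⟨⟨hrowU.imp ?_ fun hj => ?_, hcolU.imp ?_ fun hi => ?_⟩,
    hrowW.imp ?_ fun hj => ?_, hcolW.imp ?_ fun hi => ?_⟩
  · exact Exists.imp fun _ => funext
  · exact funext fun j => (h.vecMul_left j).elim (vecMul_apply_eq_zero a <| hj j ·) id
  · exact Exists.imp fun _ => funext
  · exact funext fun i => (h.mulVec_left i).elim (mulVec_apply_eq_zero b <| hi i ·) id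
  · exact Exists.imp fun _ => funext
  · exact funext fun j => (h.vecMul_right j).elim (vecMul_apply_eq_zero c <| hj j ·) id
  · exact Exists.imp fun _ => funext
  · exact funext fun i => (h.mulVec_right i).elim (mulVec_apply_eq_zero d <| hi i ·) id

end CyclicallyLinked

end LinkedMatrices

section Qubits

theorem ket0_eq_single : ket0 = Pi.single 0 1 := by
  ext i; fin_cases i <;> simp [ket0]

theorem ket1_eq_single : ket1 = Pi.single 1 1 := by
  ext i; fin_cases i <;> simp [ket1]

theorem star_ket0 : star ket0 = ket0 := by
  rw [ket0_eq_single, Pi.star_single, star_one]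

theorem star_ket1 : star ket1 = ket1 := by
  rw [ket1_eq_single, Pi.star_single, star_one]

theorem star_vk (t : ℝ) : star (vk t) = vk t := by
  ext i; fin_cases i <;> simp [vk, -Complex.ofReal_cos, -Complex.ofReal_sin]

theorem star_vk' (t : ℝ) : star (vk' t) = vk' t := by
  ext i; fin_cases i <;> simp [vk', -Complex.ofReal_cos, -Complex.ofReal_sin]

theorem vk_dotProduct_vk (t : ℝ) : vk t ⬝ᵥ vk t = 1 := by
  simp [vk, ← sq]

theorem vk'_dotProduct_vk' (t : ℝ) : vk' t ⬝ᵥ vk' t = 1 := by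
  simp [vk', ← sq]

theorem vk_dotProduct_vk' (t : ℝ) : vk t ⬝ᵥ vk' t = 0 := by
  simp [vk, vk', mul_comm]

theorem vk'_dotProduct_vk (t : ℝ) : vk' t ⬝ᵥ vk t = 0 := by
  rw [dotProduct_comm, vk_dotProduct_vk']

theorem linearIndependent_vk_vk' (t : ℝ) : LinearIndependent ℂ ![vk t, vk' t] := by
  refine LinearIndependent.pair_iff.2 fun r s h => ⟨?_, ?_⟩
  · simpa only [dotProduct_add, dotProduct_smul, vk_dotProduct_vk, vk_dotProduct_vk', smul_eq_mul,
      mul_one, mul_zero, add_zero, dotProduct_zero] using congrArg (vk t ⬝ᵥ ·) h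
  · simpa only [dotProduct_add, dotProduct_smul, vk'_dotProduct_vk, vk'_dotProduct_vk',
      smul_eq_mul, mul_one, mul_zero, zero_add, dotProduct_zero] using congrArg (vk' t ⬝ᵥ ·) h

variable {t : ℝ}

theorem vk_apply_ne_zero (ht : Real.sin (2 * t) ≠ 0) (i : Fin 2) : vk t i ≠ 0 := by
  simp only [Real.sin_two_mul, mul_ne_zero_iff] at ht
  fin_cases i <;> simpa [vk, -Complex.ofReal_cos, -Complex.ofReal_sin] using by tauto

theorem vk'_apply_ne_zero (ht : Real.sin (2 * t) ≠ 0) (i : Fin 2) : vk' t i ≠ 0 := by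
  simp only [Real.sin_two_mul, mul_ne_zero_iff] at ht
  fin_cases i <;> simpa [vk', -Complex.ofReal_cos, -Complex.ofReal_sin] using by tauto

end Qubits

theorem ip_pv_mul (x y z w : Fin 2 → ℂ) (U W : Matrix (Fin 2) (Fin 2) ℂ) :
    ip (pv x y z w) (fun p => U p.1 p.2.1 * W p.2.2.1 p.2.2.2) =
      (star x ⬝ᵥ U *ᵥ star y) * (star z ⬝ᵥ W *ᵥ star w) := by
  simp only [ip, pv, Fintype.sum_prod_type, mulVec, dotProduct, Fin.sum_univ_two, Pi.star_apply,
    map_mul, starRingEnd_apply]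
  ring

theorem ip_pv_pv (x y z w x' y' z' w' : Fin 2 → ℂ) :
    ip (pv x y z w) (pv x' y' z' w') =
      (star x ⬝ᵥ x') * (star y ⬝ᵥ y') * ((star z ⬝ᵥ z') * (star w ⬝ᵥ w')) := by
  have hpv : pv x' y' z' w' =
      fun p => vecMulVec x' y' p.1 p.2.1 * vecMulVec z' w' p.2.2.1 p.2.2.2 := by
    ext p
    simp only [pv, vecMulVec_apply, mul_assoc]
  simp only [hpv, ip_pv_mul, vecMulVec_mulVec, op_smul_eq_smul, dotProduct_smul, smul_eq_mul,
    dotProduct_comm y', dotProduct_comm w', mul_comm (star x ⬝ᵥ x'), mul_comm (star z ⬝ᵥ z')]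

section S9

variable {α β γ δ : ℝ}

theorem ip_S9_S9 (α β γ δ : ℝ) (s t : Fin 9) :
    ip (S9 α β γ δ s) (S9 α β γ δ t) = if s = t then 1 else 0 := by
  have h00 : ket0 ⬝ᵥ ket0 = 1 := by simp [ket0]
  have h01 : ket0 ⬝ᵥ ket1 = 0 := by simp [ket0, ket1]
  have h10 : ket1 ⬝ᵥ ket0 = 0 := by simp [ket0, ket1]
  have h11 : ket1 ⬝ᵥ ket1 = 1 := by simp [ket1]
  fin_cases s <;> fin_cases t <;>
    simp only [S9, cons_val, Fin.mk_zero, Fin.mk_one, Fin.reduceFinMk, Fin.isValue, Fin.reduceEq,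
      if_true, if_false, ip_pv_pv, star_ket0, star_ket1, star_vk, star_vk', h00, h01, h10, h11,
      vk_dotProduct_vk, vk'_dotProduct_vk', vk_dotProduct_vk', vk'_dotProduct_vk, mul_zero,
      zero_mul, mul_one]

theorem ip_S9_rho_mulVec (α β γ δ : ℝ) (s : Fin 9) (x : Q4 → ℂ) :
    ip (S9 α β γ δ s) (rho α β γ δ *ᵥ x) = 0 := by
  have h := vecMul_one_sub_sum_vecMulVec (f := fun t => star (S9 α β γ δ t)) (ip_S9_S9 α β γ δ) s
  calc
    ip (S9 α β γ δ s) (rho α β γ δ *ᵥ x) = star (S9 α β γ δ s) ⬝ᵥ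
        ((1 / 7 : ℂ) • (1 - ∑ t, vecMulVec (S9 α β γ δ t) (star (S9 α β γ δ t)))) *ᵥ x := rfl
    _ = 0 := by rw [smul_mulVec, dotProduct_smul, dotProduct_mulVec, h, zero_dotProduct, smul_zero]

variable {U W : Matrix (Fin 2) (Fin 2) ℂ}

theorem cyclicallyLinked_of_forall_ip_S9_eq_zero
    (h : ∀ s, ip (S9 α β γ δ s) (fun p => U p.1 p.2.1 * W p.2.2.1 p.2.2.2) = 0) :
    CyclicallyLinked (vk α) (vk β) (vk γ) (vk δ) U W := by
  simp only [S9, ket0_eq_single, ket1_eq_single, Fin.forall_fin_succ, Fin.isValue, cons_val_zero,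
    cons_val_succ, ip_pv_mul, star_vk, Pi.star_single, star_one, single_one_dotProduct,
    mulVec_single_one, mul_eq_zero] at h
  obtain ⟨h0, h1, h2, h3, h4, h5, h6, h7, -⟩ := h
  exact ⟨Fin.forall_fin_two.2 ⟨h3, h0⟩, Fin.forall_fin_two.2 ⟨h1, h5⟩,
    Fin.forall_fin_two.2 ⟨h2.symm, h4.symm⟩, Fin.forall_fin_two.2 ⟨h6.symm, h7.symm⟩⟩

theorem dotProduct_eq_zero_or_of_forall_ip_S9_eq_zero
    (h : ∀ s, ip (S9 α β γ δ s) (fun p => U p.1 p.2.1 * W p.2.2.1 p.2.2.2) = 0) :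
    vk' α ⬝ᵥ U *ᵥ vk' β = 0 ∨ vk' γ ⬝ᵥ W *ᵥ vk' δ = 0 := by
  have h8 := (ip_pv_mul (vk' α) (vk' β) (vk' γ) (vk' δ) U W).symm.trans (h 8)
  simpa only [star_vk', mul_eq_zero] using h8

theorem eq_zero_or_eq_zero_of_forall_ip_S9_eq_zero (hα : Real.sin (2 * α) ≠ 0)
    (hβ : Real.sin (2 * β) ≠ 0) (hγ : Real.sin (2 * γ) ≠ 0) (hδ : Real.sin (2 * δ) ≠ 0)
    (h : ∀ s, ip (S9 α β γ δ s) (fun p => U p.1 p.2.1 * W p.2.2.1 p.2.2.2) = 0) :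
    U = 0 ∨ W = 0 := by
  by_contra! hne
  obtain ⟨hU, hW⟩ := hne
  obtain ⟨⟨hrowU, hcolU⟩, hrowW, hcolW⟩ :=
    (cyclicallyLinked_of_forall_ip_S9_eq_zero h).exists_line_eq_zero_or_annihilated
      (vk_apply_ne_zero hα) (vk_apply_ne_zero hβ) (vk_apply_ne_zero hγ) (vk_apply_ne_zero hδ) hU hW
  rcases dotProduct_eq_zero_or_of_forall_ip_S9_eq_zero h with h8 | h8
  · exact hU <| eq_zero_of_dotProduct_mulVec_eq_zero (linearIndependent_vk_vk' α)
      (linearIndependent_vk_vk' β) (vk'_apply_ne_zero hα) (vk'_apply_ne_zero hβ) hrowU hcolU h8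
  · exact hW <| eq_zero_of_dotProduct_mulVec_eq_zero (linearIndependent_vk_vk' γ)
      (linearIndependent_vk_vk' δ) (vk'_apply_ne_zero hγ) (vk'_apply_ne_zero hδ) hrowW hcolW h8

end S9

theorem stmt16_general (α β γ δ : ℝ) (hα : Real.sin (2 * α) ≠ 0) (hβ : Real.sin (2 * β) ≠ 0)
    (hγ : Real.sin (2 * γ) ≠ 0) (hδ : Real.sin (2 * δ) ≠ 0) (v : Q4 → ℂ)
    (hprod : ∃ u w : Fin 2 × Fin 2 → ℂ,
      v = fun p : Q4 => u (p.1, p.2.1) * w (p.2.2.1, p.2.2.2))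
    (hrange : ∃ x : Q4 → ℂ, v = (rho α β γ δ).mulVec x) :
    v = 0 := by
  obtain ⟨u, w, rfl⟩ := hprod
  obtain ⟨x, hx⟩ := hrange
  rcases eq_zero_or_eq_zero_of_forall_ip_S9_eq_zero (U := of fun i j => u (i, j))
    (W := of fun k l => w (k, l)) hα hβ hγ hδ
    (fun s => (congrArg _ hx).trans (ip_S9_rho_mulVec α β γ δ s x)) with hU | hW
  · exact funext fun p => mul_eq_zero_of_left (congrFun₂ hU p.1 p.2.1) _
  · exact funext fun p => mul_eq_zero_of_right _ (congrFun₂ hW p.2.2.1 p.2.2.2)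

/-- The range of `ρ` contains no nonzero `AB:CD` product vector: if `v` is an
`AB:CD` product vector and `v = ρ x` for some `x`, then `v = 0`. -/
theorem stmt16 (α β γ δ : ℝ) (hα : α ∈ Set.Ioo 0 (Real.pi / 2))
    (hβ : β ∈ Set.Ioo 0 (Real.pi / 2)) (hγ : γ ∈ Set.Ioo 0 (Real.pi / 2))
    (hδ : δ ∈ Set.Ioo 0 (Real.pi / 2)) (v : Q4 → ℂ)
    (hprod : ∃ u w : Fin 2 × Fin 2 → ℂ,
      v = fun p : Q4 => u (p.1, p.2.1) * w (p.2.2.1, p.2.2.2))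
    (hrange : ∃ x : Q4 → ℂ, v = (rho α β γ δ).mulVec x) :
    v = 0 := by
  have sin_two_mul_ne_zero {t : ℝ} (ht : t ∈ Set.Ioo 0 (Real.pi / 2)) : Real.sin (2 * t) ≠ 0 :=
    (Real.sin_pos_of_pos_of_lt_pi (by linarith [ht.1]) (by linarith [ht.2])).ne'
  exact stmt16_general α β γ δ (sin_two_mul_ne_zero hα) (sin_two_mul_ne_zero hβ)
    (sin_two_mul_ne_zero hγ) (sin_two_mul_ne_zero hδ) v hprod hrange
end

section
/- Let α = β = γ = δ = π/4 in the definition of ρ. Then the set of real numbers { Re ⟨ψ, ρ ψ⟩ : ψ = |a₁,a₂,a₃,a₄⟩ with a₁,a₂,a₃,a₄ : Fin 2 → ℂ of norm 1 } has greatest element (3/28)·√(3/2). Equivalently, the geometric measure of entanglement of ρ is G(ρ) = −log₂((3/28)·√(3/2)). -/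
/-!
In Bloch coordinates `(xᵢ, zᵢ)` of the four factors, the weight of a product vector on the span of
`S₉` is a polynomial, `blochSum / 16`, which is to be minimized over the product of four unit disks.
Up to signs of the `zᵢ` it is symmetric in the qubits, so one may assume `x₁ ≤ x₂ ≤ x₃ ≤ x₄`. Its
quadratic form in the `zᵢ` is then bounded below by completing squares and by `zᵢ² ≤ 1 - xᵢ²`,
which leaves a bound that is affine in `x₁ ∈ [-1, x₂]`. At `x₁ = x₂` this bound is far from sharp,
while at `x₁ = -1` it is a symmetric cubic in `x₂, x₃, x₄`, minimal at `xᵢ = √(3/2) - 1`. The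
minimum `16 - 12 * √(3/2)` is attained there, by real product vectors.
-/

theorem forall_of_forall_sorted {ι : Type*} [LinearOrder ι] {P : ι → ι → ι → ι → Prop}
    (swap₁₂ : ∀ a b c d, P b a c d → P a b c d) (swap₂₃ : ∀ a b c d, P a c b d → P a b c d)
    (swap₃₄ : ∀ a b c d, P a b d c → P a b c d)
    (sorted : ∀ a b c d, a ≤ b → b ≤ c → c ≤ d → P a b c d) (a b c d : ι) : P a b c d := by
  have insert₁ : ∀ a b c d, b ≤ c → c ≤ d → P a b c d := by
    intro a b c d hbc hcd
    rcases le_total a b with hab | hba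
    · exact sorted a b c d hab hbc hcd
    refine swap₁₂ a b c d ?_
    rcases le_total a c with hac | hca
    · exact sorted b a c d hba hac hcd
    refine swap₂₃ b a c d ?_
    rcases le_total a d with had | hda
    · exact sorted b c a d hbc hca had
    · exact swap₃₄ b c a d (sorted b c d a hbc hcd hda)
  have insert₂ : ∀ a b c d, c ≤ d → P a b c d := by
    intro a b c d hcd
    rcases le_total b c with hbc | hcb
    · exact insert₁ a b c d hbc hcd
    refine swap₂₃ a b c d ?_
    rcases le_total b d with hbd | hdb
    · exact insert₁ a c b d hcb hbd
    · exact swap₃₄ a c b d (insert₁ a c d b hcd hdb)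
  rcases le_total c d with hcd | hdc
  · exact insert₂ a b c d hcd
  · exact swap₃₄ a b c d (insert₂ a b d c hdc)

/-- Sixteen times the total weight `∑ v ∈ S₉, |⟨v, ψ⟩|²` of a normalized product vector `ψ`, in
terms of the Bloch coordinates of its factors: `zᵢ` along the axis of `|0⟩` and `xᵢ` along the axis
of `a`, `b`, `c`, `d` respectively. -/
def blochSum (x₁ x₂ x₃ x₄ z₁ z₂ z₃ z₄ : ℝ) : ℝ :=
  2 * ((1 + x₁) * (1 + z₂ * z₃ + z₂ * z₄ + z₃ * z₄) +
    (1 + x₂) * (1 + z₁ * z₃ - z₁ * z₄ - z₃ * z₄) +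
    (1 + x₃) * (1 + z₁ * z₄ - z₁ * z₂ - z₂ * z₄) +
    (1 + x₄) * (1 + z₁ * z₂ - z₁ * z₃ - z₂ * z₃)) +
  (1 - x₁) * (1 - x₂) * (1 - x₃) * (1 - x₄)

section Symmetry

variable (x₁ x₂ x₃ x₄ z₁ z₂ z₃ z₄ : ℝ)

theorem blochSum_swap₁₂ :
    blochSum x₂ x₁ x₃ x₄ z₂ z₁ z₃ (-z₄) = blochSum x₁ x₂ x₃ x₄ z₁ z₂ z₃ z₄ := by
  simp only [blochSum]; ring

theorem blochSum_swap₂₃ :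
    blochSum x₁ x₃ x₂ x₄ (-z₁) z₃ z₂ z₄ = blochSum x₁ x₂ x₃ x₄ z₁ z₂ z₃ z₄ := by
  simp only [blochSum]; ring

theorem blochSum_swap₃₄ :
    blochSum x₁ x₂ x₄ x₃ (-z₁) z₂ z₄ z₃ = blochSum x₁ x₂ x₃ x₄ z₁ z₂ z₃ z₄ := by
  simp only [blochSum]; ring

end Symmetry

/-- A lower bound for `blochSum` under `x₁ ≤ x₂ ≤ x₃ ≤ x₄` that no longer involves the `zᵢ`, which
are eliminated by `zᵢ² ≤ 1 - xᵢ²`. The weaker `z₁² ≤ 2 * (1 + x₁)` is used for `z₁`, so that the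
bound is affine in `x₁`. -/
def sortedBound (x₁ x₂ x₃ x₄ : ℝ) : ℝ :=
  8 + 2 * (x₁ + x₂ + x₃ + x₄)
    - ((x₂ - x₁) * (2 - x₃ ^ 2 - x₄ ^ 2) + (x₃ - x₁) * (2 - x₂ ^ 2 - x₄ ^ 2)
      + (x₄ - x₁) * (2 - x₂ ^ 2 - x₃ ^ 2))
    - 2 * (1 + x₁) * (x₃ + x₄ - 2 * x₂)
    + (1 - x₁) * (1 - x₂) * (1 - x₃) * (1 - x₄)

theorem sortedBound_le_blochSum {x₁ x₂ x₃ x₄ z₁ z₂ z₃ z₄ : ℝ} (h₁₂ : x₁ ≤ x₂) (h₂₃ : x₂ ≤ x₃)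
    (h₃₄ : x₃ ≤ x₄) (h₁ : x₁ ^ 2 + z₁ ^ 2 ≤ 1) (h₂ : x₂ ^ 2 + z₂ ^ 2 ≤ 1)
    (h₃ : x₃ ^ 2 + z₃ ^ 2 ≤ 1) (h₄ : x₄ ^ 2 + z₄ ^ 2 ≤ 1) :
    sortedBound x₁ x₂ x₃ x₄ ≤ blochSum x₁ x₂ x₃ x₄ z₁ z₂ z₃ z₄ := by
  have squares : 0 ≤ (x₄ - x₂) * (z₂ - z₃ + z₁) ^ 2 + (x₃ - x₂) * (z₄ - z₂ + z₁) ^ 2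
      + (x₂ - x₁) * ((z₂ - z₃) ^ 2 + (z₄ - z₂) ^ 2 + (z₃ - z₄) ^ 2) := by
    have h₂₄ : 0 ≤ x₄ - x₂ := by linarith
    have := sub_nonneg.2 h₁₂
    have := sub_nonneg.2 h₂₃
    positivity
  have disk₁ : 0 ≤ (x₃ + x₄ - 2 * x₂) * (2 * (1 + x₁) - z₁ ^ 2) :=
    mul_nonneg (by linarith) (by linarith [sq_nonneg (1 + x₁)])
  have disk₂ : 0 ≤ (x₃ + x₄ - 2 * x₁) * (1 - x₂ ^ 2 - z₂ ^ 2) :=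
    mul_nonneg (by linarith) (by linarith)
  have disk₃ : 0 ≤ (x₂ + x₄ - 2 * x₁) * (1 - x₃ ^ 2 - z₃ ^ 2) :=
    mul_nonneg (by linarith) (by linarith)
  have disk₄ : 0 ≤ (x₂ + x₃ - 2 * x₁) * (1 - x₄ ^ 2 - z₄ ^ 2) :=
    mul_nonneg (by linarith) (by linarith)
  simp only [sortedBound, blochSum]
  linarith

theorem six_fifths_le_sqrt : 6 / 5 ≤ √(3 / 2 : ℝ) :=
  Real.le_sqrt_of_sq_le (by norm_num)

theorem symmetric_cubic_le_of_eq {u c : ℝ} (hu : 0 ≤ u) (hc : c ≤ 2) :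
    6 * (2 * u + c) ≤ 12 * √(3 / 2) + 2 * u ^ 3 + 2 * u * c ^ 2 := by
  have hk := six_fifths_le_sqrt
  have hk2 : √(3 / 2 : ℝ) ^ 2 = 3 / 2 := Real.sq_sqrt (by norm_num)
  set k := √(3 / 2 : ℝ)
  rcases le_total u (3 / 4) with hu' | hu'
  · -- The minimizer `3 / (2 * u)` in `c` is at least `2`, so `c = 2` is the worst case.
    have at_two : 6 * (2 * u + 2) ≤ 12 * k + 2 * u ^ 3 + 2 * u * 2 ^ 2 := by
      nlinarith [mul_nonneg hu (sq_nonneg (u - 3 / 4)), sq_nonneg (u - 3 / 4)]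
    nlinarith [mul_nonneg (sub_nonneg.2 hc) (show 0 ≤ 6 - 2 * u * (2 + c) by nlinarith)]
  · -- The value at the minimizer `3 / (2 * u)` has the double root `k` in `u`.
    have factor : 0 ≤ u ^ 2 + 2 * k * u - k ^ 2 := by nlinarith
    have key : 2 * u * (12 * k + 2 * u ^ 3 + 2 * u * c ^ 2 - 6 * (2 * u + c)) =
        (2 * u * c - 3) ^ 2 + 4 * (u - k) ^ 2 * (u ^ 2 + 2 * k * u - k ^ 2) := by
      linear_combination (16 * u ^ 2 - 16 * k * u + 4 * k ^ 2 + 6) * hk2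
    have : 0 ≤ 2 * u * (12 * k + 2 * u ^ 3 + 2 * u * c ^ 2 - 6 * (2 * u + c)) := by
      rw [key]; positivity
    exact sub_nonneg.1 (nonneg_of_mul_nonneg_right this (by linarith))

theorem symmetric_cubic_le {a b c : ℝ} (hab : 0 ≤ a + b) (habc : a + b ≤ 4 * c)
    (hc : c ≤ 2) :
    6 * (a + b + c) + 5 * (a * b * c) ≤
      12 * √(3 / 2) + (a + b + c) * (a * b + a * c + b * c) := by
  have averaged := symmetric_cubic_le_of_eq (u := (a + b) / 2) (by linarith) hc
  have := mul_nonneg (sq_nonneg (a - b)) (show 0 ≤ 4 * c - (a + b) by linarith)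
  linarith

theorem le_sortedBound_neg_one {x₂ x₃ x₄ : ℝ} (h₂ : -1 ≤ x₂) (h₂₃ : x₂ ≤ x₃) (h₃₄ : x₃ ≤ x₄)
    (h₄ : x₄ ≤ 1) : 16 - 12 * √(3 / 2) ≤ sortedBound (-1) x₂ x₃ x₄ := by
  have := symmetric_cubic_le (a := 1 + x₂) (b := 1 + x₃) (c := 1 + x₄) (by linarith)
    (by linarith) (by linarith)
  simp only [sortedBound]
  linarith

theorem quartic_le {m p q : ℝ} (hm : m ≤ 2) (hp : 0 ≤ p) (hpm : p ≤ m) (hq : 0 ≤ q)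
    (hqm : q ≤ m) :
    (p + q) * (m ^ 3 - 2 * m ^ 2 + 2 * m + 2) + 8 * m ≤
      72 / 5 + m ^ 4 + p * q * (p + q + (2 - m) ^ 2) := by
  have hm0 : 0 ≤ m := hp.trans hpm
  have edge : 41 / 4 * m + 2 * m ^ 2 ≤ 72 / 5 + 2 * m ^ 3 := by
    nlinarith [mul_nonneg hm0 (sq_nonneg (m - 5 / 3)), sq_nonneg (m - 5 / 3)]
  -- For a given sum, `p * q` is smallest on the boundary of the square `[0, m]²`.
  rcases le_total (p + q) m with h | h
  · have slope : 0 ≤ m ^ 3 - 2 * m ^ 2 + 2 * m + 2 := by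
      nlinarith [mul_nonneg hm0 (sq_nonneg (m - 1))]
    have := mul_le_mul_of_nonneg_right h slope
    have : 0 ≤ p * q * (p + q + (2 - m) ^ 2) := by positivity
    linarith
  · obtain ⟨t, rfl⟩ : ∃ t, q = m - p + t := ⟨q - (m - p), by ring⟩
    have prod : m * t ≤ p * (m - p + t) := by nlinarith
    have := mul_le_mul_of_nonneg_right prod (show 0 ≤ p + (m - p + t) + (2 - m) ^ 2 by positivity)
    have : 10 * m + 2 * m ^ 2 + t * (m ^ 2 - 2 * m + 2) ≤ 72 / 5 + 2 * m ^ 3 + m * t ^ 2 := by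
      have tangent := mul_nonneg hm0 (sq_nonneg (t - 1 / 2))
      rcases le_total m 1 with hm1 | hm1
      · have : t * ((1 - m) * (2 - m)) ≤ m * ((1 - m) * (2 - m)) :=
          mul_le_mul_of_nonneg_right (by linarith) (mul_nonneg (by linarith) (by linarith))
        linarith [pow_nonneg hm0 2, pow_nonneg hm0 3]
      · have : 0 ≤ t * ((m - 1) * (2 - m)) :=
          mul_nonneg (by linarith) (mul_nonneg (by linarith) (by linarith))
        linarith
    linarith

theorem le_sortedBound_self {x₂ x₃ x₄ : ℝ} (h₂ : -1 ≤ x₂) (h₂₃ : x₂ ≤ x₃) (h₃₄ : x₃ ≤ x₄)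
    (h₄ : x₄ ≤ 1) : 8 / 5 ≤ sortedBound x₂ x₂ x₃ x₄ := by
  have := quartic_le (m := 1 - x₂) (p := x₃ - x₂) (q := x₄ - x₂) (by linarith) (by linarith)
    (by linarith) (by linarith) (by linarith)
  simp only [sortedBound]
  linarith

theorem le_sortedBound {x₁ x₂ x₃ x₄ : ℝ} (h₁ : -1 ≤ x₁) (h₁₂ : x₁ ≤ x₂) (h₂₃ : x₂ ≤ x₃)
    (h₃₄ : x₃ ≤ x₄) (h₄ : x₄ ≤ 1) : 16 - 12 * √(3 / 2) ≤ sortedBound x₁ x₂ x₃ x₄ := by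
  have left := le_sortedBound_neg_one (h₁.trans h₁₂) h₂₃ h₃₄ h₄
  have right : 16 - 12 * √(3 / 2) ≤ sortedBound x₂ x₂ x₃ x₄ := by
    linarith [le_sortedBound_self (h₁.trans h₁₂) h₂₃ h₃₄ h₄, six_fifths_le_sqrt]
  rcases h₁.eq_or_lt with rfl | h₁'
  · exact left
  have affine : (1 + x₂) * sortedBound x₁ x₂ x₃ x₄ =
      (x₂ - x₁) * sortedBound (-1) x₂ x₃ x₄ + (1 + x₁) * sortedBound x₂ x₂ x₃ x₄ := by
    simp only [sortedBound]; ring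
  refine le_of_mul_le_mul_left ?_ (show 0 < 1 + x₂ by linarith)
  rw [affine]
  linarith [mul_le_mul_of_nonneg_left left (sub_nonneg.2 h₁₂),
    mul_le_mul_of_nonneg_left right (show 0 ≤ 1 + x₁ by linarith)]

theorem le_blochSum (x₁ x₂ x₃ x₄ : ℝ) : ∀ {z₁ z₂ z₃ z₄ : ℝ}, x₁ ^ 2 + z₁ ^ 2 ≤ 1 →
    x₂ ^ 2 + z₂ ^ 2 ≤ 1 → x₃ ^ 2 + z₃ ^ 2 ≤ 1 → x₄ ^ 2 + z₄ ^ 2 ≤ 1 →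
    16 - 12 * √(3 / 2) ≤ blochSum x₁ x₂ x₃ x₄ z₁ z₂ z₃ z₄ := by
  refine forall_of_forall_sorted (P := fun x₁ x₂ x₃ x₄ => ∀ {z₁ z₂ z₃ z₄ : ℝ},
    x₁ ^ 2 + z₁ ^ 2 ≤ 1 → x₂ ^ 2 + z₂ ^ 2 ≤ 1 → x₃ ^ 2 + z₃ ^ 2 ≤ 1 → x₄ ^ 2 + z₄ ^ 2 ≤ 1 →
    16 - 12 * √(3 / 2) ≤ blochSum x₁ x₂ x₃ x₄ z₁ z₂ z₃ z₄) ?_ ?_ ?_ ?_ x₁ x₂ x₃ x₄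
  · intro a b c d h _ _ _ _ ha hb hc hd
    rw [← blochSum_swap₁₂]
    exact h hb ha hc (by rwa [neg_sq])
  · intro a b c d h _ _ _ _ ha hb hc hd
    rw [← blochSum_swap₂₃]
    exact h (by rwa [neg_sq]) hc hb hd
  · intro a b c d h _ _ _ _ ha hb hc hd
    rw [← blochSum_swap₃₄]
    exact h (by rwa [neg_sq]) hb hd hc
  · intro a b c d hab hbc hcd _ _ _ _ ha hb hc hd
    refine le_trans (le_sortedBound ?_ hab hbc hcd ?_)
      (sortedBound_le_blochSum hab hbc hcd ha hb hc hd)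
    · nlinarith
    · nlinarith

theorem blochSum_minimizer {z : ℝ} (hz : z ^ 2 = 1 - (√(3 / 2) - 1) ^ 2) :
    blochSum (-1) (√(3 / 2) - 1) (√(3 / 2) - 1) (√(3 / 2) - 1) 0 z z z =
      16 - 12 * √(3 / 2) := by
  have hk2 : √(3 / 2 : ℝ) ^ 2 = 3 / 2 := Real.sq_sqrt (by norm_num)
  simp only [blochSum]
  linear_combination (-6 * √(3 / 2)) * hz + 4 * √(3 / 2) * hk2

/-- The expectation value of the observable `cos (2 * t) Z + sin (2 * t) X`, whose eigenvectors
are `vk t` and `vk' t`, in the qubit state `a`. At `t = 0` and `t = π / 4` it is the third and the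
first coordinate of the Bloch vector. -/
noncomputable def blochCoord (t : ℝ) (a : Fin 2 → ℂ) : ℝ :=
  Real.cos (2 * t) * (Complex.normSq (a 0) - Complex.normSq (a 1)) +
    Real.sin (2 * t) * (2 * (star (a 0) * a 1).re)

theorem normSq_ofReal_mul_add_ofReal_mul (x y : ℝ) (u v : ℂ) :
    Complex.normSq (x * u + y * v) =
      x ^ 2 * Complex.normSq u + y ^ 2 * Complex.normSq v + 2 * x * y * (star u * v).re := by
  simp only [Complex.normSq_apply, Complex.add_re, Complex.add_im, Complex.mul_re,
    Complex.mul_im, Complex.ofReal_re, Complex.ofReal_im, RCLike.star_def, Complex.conj_re,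
    Complex.conj_im]
  ring

theorem normSq_star_vk_dotProduct (t : ℝ) (a : Fin 2 → ℂ) :
    Complex.normSq (star (vk t) ⬝ᵥ a) = (∑ i, Complex.normSq (a i) + blochCoord t a) / 2 := by
  have expand : star (vk t) ⬝ᵥ a = (Real.cos t : ℂ) * a 0 + (Real.sin t : ℂ) * a 1 := by
    simp [vk, dotProduct, -Complex.ofReal_cos, -Complex.ofReal_sin]
  rw [expand, normSq_ofReal_mul_add_ofReal_mul, blochCoord, Fin.sum_univ_two, Real.cos_two_mul',
    Real.sin_two_mul]
  linear_combination (Complex.normSq (a 0) + Complex.normSq (a 1)) / 2 * Real.cos_sq_add_sin_sq t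

theorem normSq_star_vk'_dotProduct (t : ℝ) (a : Fin 2 → ℂ) :
    Complex.normSq (star (vk' t) ⬝ᵥ a) = (∑ i, Complex.normSq (a i) - blochCoord t a) / 2 := by
  have expand :
      star (vk' t) ⬝ᵥ a = (Real.sin t : ℂ) * a 0 + ((-Real.cos t : ℝ) : ℂ) * a 1 := by
    simp [vk', dotProduct, -Complex.ofReal_cos, -Complex.ofReal_sin]
  rw [expand, normSq_ofReal_mul_add_ofReal_mul, blochCoord, Fin.sum_univ_two, Real.cos_two_mul',
    Real.sin_two_mul]
  linear_combination (Complex.normSq (a 0) + Complex.normSq (a 1)) / 2 * Real.cos_sq_add_sin_sq t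

theorem normSq_star_ket0_dotProduct (a : Fin 2 → ℂ) :
    Complex.normSq (star ket0 ⬝ᵥ a) = (∑ i, Complex.normSq (a i) + blochCoord 0 a) / 2 := by
  rw [← normSq_star_vk_dotProduct]
  simp [vk, ket0]

theorem normSq_star_ket1_dotProduct (a : Fin 2 → ℂ) :
    Complex.normSq (star ket1 ⬝ᵥ a) = (∑ i, Complex.normSq (a i) - blochCoord 0 a) / 2 := by
  rw [← normSq_star_vk'_dotProduct]
  simp [vk', ket1, dotProduct]

theorem blochCoord_zero (a : Fin 2 → ℂ) :
    blochCoord 0 a = Complex.normSq (a 0) - Complex.normSq (a 1) := by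
  simp [blochCoord]

theorem blochCoord_pi_div_four (a : Fin 2 → ℂ) :
    blochCoord (Real.pi / 4) a = 2 * (star (a 0) * a 1).re := by
  rw [blochCoord, show 2 * (Real.pi / 4) = Real.pi / 2 by ring, Real.cos_pi_div_two,
    Real.sin_pi_div_two]
  ring

theorem blochCoord_sq_add_sq_le (a : Fin 2 → ℂ) :
    blochCoord (Real.pi / 4) a ^ 2 + blochCoord 0 a ^ 2 ≤ (∑ i, Complex.normSq (a i)) ^ 2 := by
  have coherence :
      (star (a 0) * a 1).re ^ 2 ≤ Complex.normSq (a 0) * Complex.normSq (a 1) :=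
    calc (star (a 0) * a 1).re ^ 2 ≤ Complex.normSq (star (a 0) * a 1) :=
          (sq _).trans_le (Complex.re_sq_le_normSq _)
      _ = Complex.normSq (a 0) * Complex.normSq (a 1) := by
          rw [map_mul, ← starRingEnd_apply, Complex.normSq_conj]
  rw [blochCoord_pi_div_four, blochCoord_zero, Fin.sum_univ_two]
  linarith

theorem sum_normSq_vk (t : ℝ) : ∑ i, Complex.normSq (vk t i) = 1 := by
  simp [vk, Complex.normSq_ofReal, ← sq, -Complex.ofReal_cos, -Complex.ofReal_sin]

theorem blochCoord_zero_vk (t : ℝ) : blochCoord 0 (vk t) = Real.cos (2 * t) := by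
  simp [blochCoord_zero, vk, Complex.normSq_ofReal, Real.cos_two_mul', ← sq, -Complex.ofReal_cos,
    -Complex.ofReal_sin]

theorem blochCoord_pi_div_four_vk (t : ℝ) :
    blochCoord (Real.pi / 4) (vk t) = Real.sin (2 * t) := by
  rw [blochCoord_pi_div_four, Real.sin_two_mul, vk]
  simp only [Matrix.cons_val_zero, Matrix.cons_val_one, RCLike.star_def, Complex.conj_ofReal,
    ← Complex.ofReal_mul, Complex.ofReal_re]
  ring

theorem star_pv_dotProduct_pv (x y z w x' y' z' w' : Fin 2 → ℂ) :
    star (pv x y z w) ⬝ᵥ pv x' y' z' w' =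
      (star x ⬝ᵥ x') * (star y ⬝ᵥ y') * (star z ⬝ᵥ z') * (star w ⬝ᵥ w') := by
  simp only [dotProduct, pv, Pi.star_apply, Fintype.sum_prod_type, Fin.sum_univ_two, star_mul']
  ring

theorem sum_normSq_pv (x y z w : Fin 2 → ℂ) :
    ∑ p, Complex.normSq (pv x y z w p) =
      (∑ i, Complex.normSq (x i)) * (∑ i, Complex.normSq (y i)) *
        (∑ i, Complex.normSq (z i)) * (∑ i, Complex.normSq (w i)) := by
  simp only [pv, map_mul, Fintype.sum_prod_type, Fin.sum_univ_two]
  ring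

theorem star_dotProduct_self {ι : Type*} [Fintype ι] (v : ι → ℂ) :
    star v ⬝ᵥ v = ((∑ i, Complex.normSq (v i) : ℝ) : ℂ) := by
  simp [dotProduct, Complex.normSq_eq_conj_mul_self]

theorem star_dotProduct_vecMulVec_mulVec {ι : Type*} [Fintype ι] (u v : ι → ℂ) :
    star v ⬝ᵥ (Matrix.vecMulVec u (star u)).mulVec v = (Complex.normSq (star u ⬝ᵥ v) : ℂ) := by
  rw [Matrix.vecMulVec_mulVec, op_smul_eq_smul, dotProduct_smul, smul_eq_mul,
    Matrix.star_dotProduct v u, ← Complex.mul_conj, starRingEnd_apply]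

theorem ip_rho_mulVec (α β γ δ : ℝ) (v : Q4 → ℂ) :
    ip v ((rho α β γ δ).mulVec v) =
      ((1 / 7 * (∑ x, Complex.normSq (v x) - ∑ t, Complex.normSq (star (S9 α β γ δ t) ⬝ᵥ v)) : ℝ)
        : ℂ) := by
  have hrho : rho α β γ δ = (1 / 7 : ℂ) •
      (1 - ∑ t, Matrix.vecMulVec (S9 α β γ δ t) (star (S9 α β γ δ t))) := rfl
  change star v ⬝ᵥ _ = _
  rw [hrho, Matrix.smul_mulVec, Matrix.sub_mulVec, Matrix.one_mulVec, Matrix.sum_mulVec,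
    dotProduct_smul, dotProduct_sub, dotProduct_sum, star_dotProduct_self]
  simp only [star_dotProduct_vecMulVec_mulVec]
  push_cast
  rfl

section ProductState

variable {a₁ a₂ a₃ a₄ : Fin 2 → ℂ} (h₁ : ∑ i, Complex.normSq (a₁ i) = 1)
  (h₂ : ∑ i, Complex.normSq (a₂ i) = 1) (h₃ : ∑ i, Complex.normSq (a₃ i) = 1)
  (h₄ : ∑ i, Complex.normSq (a₄ i) = 1)

include h₁ h₂ h₃ h₄

theorem sum_normSq_star_S9_dotProduct_pv (α β γ δ : ℝ) :
    ∑ t, Complex.normSq (star (S9 α β γ δ t) ⬝ᵥ pv a₁ a₂ a₃ a₄) =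
      blochSum (blochCoord α a₁) (blochCoord β a₂) (blochCoord γ a₃) (blochCoord δ a₄)
        (blochCoord 0 a₁) (blochCoord 0 a₂) (blochCoord 0 a₃) (blochCoord 0 a₄) / 16 := by
  simp only [Fin.sum_univ_succ, S9, Matrix.cons_val_zero, Matrix.cons_val_succ,
    Finset.univ_eq_empty, Finset.sum_empty, star_pv_dotProduct_pv, map_mul,
    normSq_star_ket0_dotProduct, normSq_star_ket1_dotProduct, normSq_star_vk_dotProduct,
    normSq_star_vk'_dotProduct, h₁, h₂, h₃, h₄, blochSum]
  ring

theorem re_ip_rho_mulVec_pv (α β γ δ : ℝ) :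
    (ip (pv a₁ a₂ a₃ a₄) ((rho α β γ δ).mulVec (pv a₁ a₂ a₃ a₄))).re =
      1 / 7 * (1 - blochSum (blochCoord α a₁) (blochCoord β a₂) (blochCoord γ a₃)
        (blochCoord δ a₄) (blochCoord 0 a₁) (blochCoord 0 a₂) (blochCoord 0 a₃)
        (blochCoord 0 a₄) / 16) := by
  simp only [ip_rho_mulVec, Complex.ofReal_re, sum_normSq_pv, h₁, h₂, h₃, h₄, mul_one,
    sum_normSq_star_S9_dotProduct_pv h₁ h₂ h₃ h₄]

end ProductState

theorem exists_sin_two_mul_eq {s : ℝ} (hs : -1 ≤ s) (hs' : s ≤ 1) :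
    ∃ t, Real.sin (2 * t) = s :=
  ⟨Real.arcsin s / 2, by rw [mul_div_cancel₀ _ two_ne_zero, Real.sin_arcsin hs hs']⟩

/-- For `α = β = γ = δ = π/4`, the set of values `⟨ψ, ρ ψ⟩` over normalized 4-qubit
product vectors `ψ = |a₁,a₂,a₃,a₄⟩` has greatest element `(3/28)·√(3/2)`;
equivalently, the geometric measure of entanglement of `ρ` is
`G(ρ) = −log₂((3/28)·√(3/2))`. -/
theorem stmt18 :
    IsGreatest
      {r : ℝ | ∃ a1 a2 a3 a4 : Fin 2 → ℂ,
        (∑ i, Complex.normSq (a1 i)) = 1 ∧ (∑ i, Complex.normSq (a2 i)) = 1 ∧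
        (∑ i, Complex.normSq (a3 i)) = 1 ∧ (∑ i, Complex.normSq (a4 i)) = 1 ∧
        r = (ip (pv a1 a2 a3 a4)
              ((rho (Real.pi / 4) (Real.pi / 4) (Real.pi / 4) (Real.pi / 4)).mulVec
                (pv a1 a2 a3 a4))).re}
      ((3 / 28) * Real.sqrt (3 / 2)) := by
  constructor
  · have upper : √(3 / 2 : ℝ) ≤ 2 := Real.sqrt_le_iff.2 (by norm_num)
    obtain ⟨t, hsin⟩ := exists_sin_two_mul_eq (s := √(3 / 2) - 1)
      (by linarith [six_fifths_le_sqrt]) (by linarith)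
    refine ⟨vk (-(Real.pi / 4)), vk t, vk t, vk t, sum_normSq_vk _, sum_normSq_vk _,
      sum_normSq_vk _, sum_normSq_vk _, ?_⟩
    have hcos : Real.cos (2 * t) ^ 2 = 1 - (√(3 / 2) - 1) ^ 2 := by rw [Real.cos_sq', hsin]
    rw [re_ip_rho_mulVec_pv (sum_normSq_vk _) (sum_normSq_vk _) (sum_normSq_vk _)
      (sum_normSq_vk _)]
    simp only [blochCoord_zero_vk, blochCoord_pi_div_four_vk, hsin,
      show 2 * -(Real.pi / 4) = -(Real.pi / 2) by ring, Real.sin_neg, Real.sin_pi_div_two,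
      Real.cos_neg, Real.cos_pi_div_two, blochSum_minimizer hcos]
    ring
  · rintro r ⟨a₁, a₂, a₃, a₄, h₁, h₂, h₃, h₄, rfl⟩
    have disk {a : Fin 2 → ℂ} (h : ∑ i, Complex.normSq (a i) = 1) :
        blochCoord (Real.pi / 4) a ^ 2 + blochCoord 0 a ^ 2 ≤ 1 := by
      simpa [h] using blochCoord_sq_add_sq_le a
    rw [re_ip_rho_mulVec_pv h₁ h₂ h₃ h₄]
    linarith [le_blochSum _ _ _ _ (disk h₁) (disk h₂) (disk h₃) (disk h₄)]
end
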